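/- Let K be an algebraically closed field of characteristic zero. Let G ⊆ GL₄(K) be the set of matrices of the form [[1, a, d, b], [0, t, 0, c], [0, 0, 1, e], [0, 0, 0, 1]] with t ∈ K∖{0} and a, b, c, d, e ∈ K, and let H ⊆ G be the subset of such matrices with d = 0 and e = 0. Then G and H are subgroups of GL₄(K), and the subgroup of GL₄(K) generated by the diagonalizable elements of G equals H. -/

import Mathlib

/-- An element of `GL (Fin 4) K` is diagonalizable (semisimple) if its underlying matrix is
conjugate to a diagonal matrix. -/
def GLIsDiagonalizable {K : Type*} [Field K] (M : GL (Fin 4) K) : Prop :=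
  ∃ P : GL (Fin 4) K, ∃ dv : Fin 4 → K,
    (M : Matrix (Fin 4) (Fin 4) K) =
      (P : Matrix (Fin 4) (Fin 4) K) * Matrix.diagonal dv *
        ((P⁻¹ : GL (Fin 4) K) : Matrix (Fin 4) (Fin 4) K)

/-- The solvable group `G` of the Example. -/
def Gset (K : Type*) [Field K] : Set (GL (Fin 4) K) :=
  {M | ∃ t a b c d e : K, t ≠ 0 ∧
    (M : Matrix (Fin 4) (Fin 4) K) = !![1, a, d, b; 0, t, 0, c; 0, 0, 1, e; 0, 0, 0, 1]}

/-- The subgroup `H = G^mult` of the Example: the elements of `G` with `d = 0`, `e = 0`. -/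
def Hset (K : Type*) [Field K] : Set (GL (Fin 4) K) :=
  {M | ∃ t a b c : K, t ≠ 0 ∧
    (M : Matrix (Fin 4) (Fin 4) K) = !![1, a, 0, b; 0, t, 0, c; 0, 0, 1, 0; 0, 0, 0, 1]}

namespace SolvableExample

variable {K : Type*} [Field K]

/-- The element of `G` with parameters `t, a, b, c, d, e`. -/
def element (t : Kˣ) (a b c d e : K) : GL (Fin 4) K where
  val := !![1, a, d, b; 0, (t : K), 0, c; 0, 0, 1, e; 0, 0, 0, 1]
  inv := !![1, -a * (t : K)⁻¹, -d, a * c * (t : K)⁻¹ + d * e - b;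
    0, (t : K)⁻¹, 0, -c * (t : K)⁻¹; 0, 0, 1, -e; 0, 0, 0, 1]
  val_inv := by
    have := t.ne_zero
    ext i j
    fin_cases i <;> fin_cases j <;> simp [Matrix.mul_apply, Fin.sum_univ_four] <;>
      field_simp <;> ring
  inv_val := by
    have := t.ne_zero
    ext i j
    fin_cases i <;> fin_cases j <;> simp [Matrix.mul_apply, Fin.sum_univ_four] <;>
      field_simp <;> ring

theorem coe_element (t : Kˣ) (a b c d e : K) :
    (element t a b c d e : Matrix (Fin 4) (Fin 4) K) =
      !![1, a, d, b; 0, (t : K), 0, c; 0, 0, 1, e; 0, 0, 0, 1] := rfl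

theorem element_mul (t t' : Kˣ) (a b c d e a' b' c' d' e' : K) :
    element t a b c d e * element t' a' b' c' d' e' =
      element (t * t') (a' + a * t') (b' + a * c' + d * e' + b) (t * c' + c)
        (d' + d) (e' + e) := by
  apply Units.ext
  ext i j
  fin_cases i <;> fin_cases j <;>
    simp [coe_element, Matrix.mul_apply, Fin.sum_univ_four]

theorem element_one : element (1 : Kˣ) 0 0 0 0 0 = 1 := by
  apply Units.ext
  ext i j
  fin_cases i <;> fin_cases j <;> simp [coe_element]

theorem element_inv (t : Kˣ) (a b c d e : K) :
    (element t a b c d e)⁻¹ =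
      element t⁻¹ (-a * (t : K)⁻¹) (a * c * (t : K)⁻¹ + d * e - b) (-c * (t : K)⁻¹) (-d) (-e) := by
  apply Units.ext
  simp only [coe_element, Units.val_inv_eq_inv_val]
  rfl

theorem mem_Gset {M : GL (Fin 4) K} :
    M ∈ Gset K ↔ ∃ (t : Kˣ) (a b c d e : K), M = element t a b c d e := by
  constructor
  · rintro ⟨t, a, b, c, d, e, ht, hM⟩
    exact ⟨Units.mk0 t ht, a, b, c, d, e, Units.ext hM⟩
  · rintro ⟨t, a, b, c, d, e, rfl⟩
    exact ⟨t, a, b, c, d, e, t.ne_zero, rfl⟩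

theorem mem_Hset {M : GL (Fin 4) K} :
    M ∈ Hset K ↔ ∃ (t : Kˣ) (a b c : K), M = element t a b c 0 0 := by
  constructor
  · rintro ⟨t, a, b, c, ht, hM⟩
    exact ⟨Units.mk0 t ht, a, b, c, Units.ext hM⟩
  · rintro ⟨t, a, b, c, rfl⟩
    exact ⟨t, a, b, c, t.ne_zero, rfl⟩

variable (K) in
/-- `G` as a subgroup of `GL₄(K)`. -/
def subgroupG : Subgroup (GL (Fin 4) K) where
  carrier := Gset K
  one_mem' := mem_Gset.2 ⟨1, 0, 0, 0, 0, 0, element_one.symm⟩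
  mul_mem' := by
    intro M N hM hN
    obtain ⟨t, a, b, c, d, e, rfl⟩ := mem_Gset.1 hM
    obtain ⟨t', a', b', c', d', e', rfl⟩ := mem_Gset.1 hN
    exact mem_Gset.2 ⟨_, _, _, _, _, _, element_mul ..⟩
  inv_mem' := by
    intro M hM
    obtain ⟨t, a, b, c, d, e, rfl⟩ := mem_Gset.1 hM
    exact mem_Gset.2 ⟨_, _, _, _, _, _, element_inv ..⟩

variable (K) in
/-- `H` as a subgroup of `GL₄(K)`. -/
def subgroupH : Subgroup (GL (Fin 4) K) where
  carrier := Hset K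
  one_mem' := mem_Hset.2 ⟨1, 0, 0, 0, element_one.symm⟩
  mul_mem' := by
    intro M N hM hN
    obtain ⟨t, a, b, c, rfl⟩ := mem_Hset.1 hM
    obtain ⟨t', a', b', c', rfl⟩ := mem_Hset.1 hN
    rw [element_mul, add_zero (0 : K)]
    exact mem_Hset.2 ⟨_, _, _, _, rfl⟩
  inv_mem' := by
    intro M hM
    obtain ⟨t, a, b, c, rfl⟩ := mem_Hset.1 hM
    rw [element_inv, neg_zero]
    exact mem_Hset.2 ⟨_, _, _, _, rfl⟩

/-- A diagonalizable matrix annihilated by `(X - 1) ^ 3 * (X - t)` is annihilated by the product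
of the distinct linear factors. -/
theorem annihilated_by_distinct_factors {M : GL (Fin 4) K} (hM : GLIsDiagonalizable M) {t : K}
    (h : ((M : Matrix (Fin 4) (Fin 4) K) - 1) ^ 3 *
      ((M : Matrix (Fin 4) (Fin 4) K) - Matrix.scalar (Fin 4) t) = 0) :
    (t = 1 → (M : Matrix (Fin 4) (Fin 4) K) = 1) ∧
    ((M : Matrix (Fin 4) (Fin 4) K) - 1) *
      ((M : Matrix (Fin 4) (Fin 4) K) - Matrix.scalar (Fin 4) t) = 0 := by
  obtain ⟨P, v, hPv⟩ := hM
  have hPi : (P : Matrix (Fin 4) (Fin 4) K) * ((P⁻¹ : GL (Fin 4) K) : Matrix _ _ K) = 1 := P.mul_inv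
  have hiP : ((P⁻¹ : GL (Fin 4) K) : Matrix _ _ K) * (P : Matrix (Fin 4) (Fin 4) K) = 1 := P.inv_mul
  generalize ((P⁻¹ : GL (Fin 4) K) : Matrix (Fin 4) (Fin 4) K) = Q at *
  generalize (P : Matrix (Fin 4) (Fin 4) K) = R at *
  have conj_mul (x y : Fin 4 → K) : (R * Matrix.diagonal x * Q) * (R * Matrix.diagonal y * Q) =
      R * Matrix.diagonal (x * y) * Q := by
    calc _ = R * Matrix.diagonal x * (Q * R) * Matrix.diagonal y * Q := by
          simp only [Matrix.mul_assoc]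
      _ = _ := by
          rw [hiP, Matrix.mul_one, Matrix.mul_assoc R, Matrix.diagonal_mul_diagonal]; rfl
  have conj_sub (s : K) : (M : Matrix (Fin 4) (Fin 4) K) - Matrix.scalar (Fin 4) s =
      R * Matrix.diagonal (fun i => v i - s) * Q := by
    have hs : Matrix.scalar (Fin 4) s = R * Matrix.diagonal (fun _ => s) * Q := by
      rw [← Matrix.scalar_apply,
        ← (Matrix.scalar_commute s (fun _ => mul_comm _ _) R).eq, Matrix.mul_assoc, hPi,
        Matrix.mul_one]
    rw [hPv, hs, ← Matrix.sub_mul, ← Matrix.mul_sub, Matrix.diagonal_sub]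
  have conj_sub_one := conj_sub 1
  rw [map_one] at conj_sub_one
  have hv (i : Fin 4) : v i = 1 ∨ v i = t := by
    rw [pow_succ, pow_two, conj_sub_one, conj_sub, conj_mul, conj_mul, conj_mul] at h
    have h' := congrArg (fun A => Q * A * R) h
    simp only [Matrix.mul_zero, Matrix.zero_mul] at h'
    rw [Matrix.mul_assoc R, ← Matrix.mul_assoc Q, hiP, Matrix.one_mul, Matrix.mul_assoc, hiP,
      Matrix.mul_one, Matrix.diagonal_eq_zero] at h'
    have := congrFun h' i
    simpa [sub_eq_zero] using this
  constructor
  · rintro rfl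
    rw [← sub_eq_zero, conj_sub_one]
    have : (fun i => v i - 1) = 0 := funext fun i => by simpa [sub_eq_zero] using hv i
    rw [this]
    simp
  · rw [conj_sub_one, conj_sub, conj_mul]
    have : ((fun i => v i - 1) * fun i => v i - t) = 0 :=
      funext fun i => by simpa [sub_eq_zero] using hv i
    rw [this]
    simp

theorem diagonalizable_mem_Hset {M : GL (Fin 4) K} (hG : M ∈ Gset K)
    (hM : GLIsDiagonalizable M) : M ∈ Hset K := by
  obtain ⟨t, a, b, c, d, e, rfl⟩ := mem_Gset.1 hG
  obtain ⟨h1, h2⟩ := annihilated_by_distinct_factors hM (t := t) (by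
    ext i j
    fin_cases i <;> fin_cases j <;>
      simp [coe_element, pow_succ, Matrix.mul_apply, Fin.sum_univ_four, Matrix.one_apply] <;> ring)
  have hde : d = 0 ∧ e = 0 := by
    by_cases ht : (t : K) = 1
    · have h := h1 ht
      exact ⟨by simpa [coe_element] using congrFun (congrFun h 0) 2,
        by simpa [coe_element] using congrFun (congrFun h 2) 3⟩
    · have hd := congrFun (congrFun h2 0) 2
      have he := congrFun (congrFun h2 2) 3
      have ht' : (1 : K) - t ≠ 0 := sub_ne_zero.2 (Ne.symm ht)
      simp [coe_element, Matrix.mul_apply, Fin.sum_univ_four, ht'] at hd he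
      exact ⟨hd, he⟩
  obtain ⟨rfl, rfl⟩ := hde
  exact mem_Hset.2 ⟨t, a, b, c, rfl⟩

theorem element_diagonalizable {t : Kˣ} (ht : (t : K) ≠ 1) {a b c : K}
    (hb : b * (t - 1) = a * c) : GLIsDiagonalizable (element t a b c 0 0) := by
  have ht' : (t : K) - 1 ≠ 0 := sub_ne_zero.2 ht
  obtain rfl : b = a * c / (t - 1) := by field_simp; exact hb
  refine ⟨element 1 (a / (t - 1)) 0 (-c / (t - 1)) 0 0, ![1, t, 1, 1], ?_⟩
  rw [element_inv]
  ext i j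
  fin_cases i <;> fin_cases j <;>
    simp [coe_element, Matrix.mul_apply, Fin.sum_univ_four, Matrix.vecMul_diagonal] <;>
    field_simp <;> ring

variable (K) in
/-- The subgroup generated by the diagonalizable elements of `G`. -/
abbrev Gmult : Subgroup (GL (Fin 4) K) :=
  Subgroup.closure {M : GL (Fin 4) K | M ∈ Gset K ∧ GLIsDiagonalizable M}

theorem element_mem_closure_of_diagonalizable {t : Kˣ} (ht : (t : K) ≠ 1) {a b c : K}
    (hb : b * (t - 1) = a * c) : element t a b c 0 0 ∈ Gmult K :=
  Subgroup.subset_closure ⟨mem_Gset.2 ⟨_, _, _, _, _, _, rfl⟩, element_diagonalizable ht hb⟩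

variable [CharZero K]

variable (K) in
/-- The unit `2` of a field of characteristic zero. -/
def unitTwo : Kˣ := Units.mk0 2 two_ne_zero

theorem coe_unitTwo : (unitTwo K : K) = 2 := rfl

theorem inv_two_ne_one : ((unitTwo K)⁻¹ : Kˣ) ≠ (1 : K) := by
  simp [coe_unitTwo]

theorem central_mem_closure (z : K) : element 1 0 z 0 0 0 ∈ Gmult K := by
  have h4 : element (unitTwo K * unitTwo K) 1 (-2 * z) (-6 * z) 0 0 ∈ Gmult K :=
    element_mem_closure_of_diagonalizable
      (by simp only [Units.val_mul, coe_unitTwo]; norm_num)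
      (by simp only [Units.val_mul, coe_unitTwo]; ring)
  have hhalf : element (unitTwo K)⁻¹ (-1 / 2) (3 / 2 * z) (3 / 2 * z) 0 0 ∈ Gmult K :=
    element_mem_closure_of_diagonalizable inv_two_ne_one
      (by simp only [Units.val_inv_eq_inv_val, coe_unitTwo]; ring)
  have hdiag : element (unitTwo K)⁻¹ 0 0 0 0 0 ∈ Gmult K :=
    element_mem_closure_of_diagonalizable inv_two_ne_one (by simp)
  convert mul_mem (mul_mem h4 hhalf) hdiag using 1
  rw [element_mul, element_mul]
  congr 1 <;> simp [coe_unitTwo] <;> ring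

theorem element_mem_closure_of_ne_one {t : Kˣ} (ht : (t : K) ≠ 1) (a b c : K) :
    element t a b c 0 0 ∈ Gmult K := by
  have ht' : (t : K) - 1 ≠ 0 := sub_ne_zero.2 ht
  have hs : element t a (a * c / (t - 1)) c 0 0 ∈ Gmult K :=
    element_mem_closure_of_diagonalizable ht (by field_simp)
  convert mul_mem hs (central_mem_closure (b - a * c / (t - 1))) using 1
  rw [element_mul]
  congr 1 <;> simp

theorem element_mem_closure (t : Kˣ) (a b c : K) : element t a b c 0 0 ∈ Gmult K := by
  by_cases ht : (t : K) = 1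
  · obtain rfl : t = 1 := Units.ext ht
    have h2 : element (unitTwo K) 0 0 0 0 0 ∈ Gmult K :=
      element_mem_closure_of_ne_one (by simp [coe_unitTwo]) _ _ _
    convert mul_mem h2 (element_mem_closure_of_ne_one inv_two_ne_one a b (c / 2)) using 1
    rw [element_mul]
    congr 1 <;> simp [coe_unitTwo]
    field_simp
  · exact element_mem_closure_of_ne_one ht a b c

end SolvableExample

open SolvableExample in
/-- `G` and `H` are subgroups of `GL₄(K)`, and the subgroup generated by the diagonalizable
elements of `G` is exactly `H`. -/
theorem stmt8 (K : Type*) [Field K] [IsAlgClosed K] [CharZero K] :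
    (∃ G : Subgroup (GL (Fin 4) K), (G : Set (GL (Fin 4) K)) = Gset K) ∧
    (∃ H : Subgroup (GL (Fin 4) K), (H : Set (GL (Fin 4) K)) = Hset K) ∧
    ((Subgroup.closure {M : GL (Fin 4) K | M ∈ Gset K ∧ GLIsDiagonalizable M} :
        Subgroup (GL (Fin 4) K)) : Set (GL (Fin 4) K)) = Hset K := by
  refine ⟨⟨subgroupG K, rfl⟩, ⟨subgroupH K, rfl⟩, Set.Subset.antisymm ?_ ?_⟩
  · change Subgroup.closure _ ≤ subgroupH K
    rw [Subgroup.closure_le]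
    exact fun M hM => diagonalizable_mem_Hset hM.1 hM.2
  · intro M hM
    obtain ⟨t, a, b, c, rfl⟩ := mem_Hset.1 hM
    exact element_mem_closure t a b c
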